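/- arXiv:2211.09417 — 2 statements merged into one kernel-verified Lean document; each statement's English description precedes it below -/
import Mathlib

section
/- For every integer n ≥ 2, the number of binary words z of length n that begin with the letter 0 and are not balanced while every proper factor of z is balanced equals n − φ(n) − 1, where φ is the Euler totient function; moreover, every such word z is a Lyndon word (for the order 0 < 1). -/
/-- The lower Christoffel word `w_{a,b}`: the binary word of length `a+b` whose
`k`-th letter (1-based) is `⌊kb/(a+b)⌋ - ⌊(k-1)b/(a+b)⌋` (with `false = 0`, `true = 1`). -/
def lowerChristoffel (a b : ℕ) : List Bool :=
  (List.range (a + b)).map fun i => decide ((i + 1) * b / (a + b) ≠ i * b / (a + b))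

/-- The upper Christoffel word `W_{a,b}`: the binary word of length `a+b` whose
`k`-th letter is `⌈kb/(a+b)⌉ - ⌈(k-1)b/(a+b)⌉`. -/
def upperChristoffel (a b : ℕ) : List Bool :=
  (List.range (a + b)).map fun i =>
    decide (((i + 1) * b + (a + b) - 1) / (a + b) ≠ (i * b + (a + b) - 1) / (a + b))

/-- `p` is a period of `w`: `p` is positive and `w_i = w_{i+p}` for all valid indices. -/
def HasPeriod (w : List Bool) (p : ℕ) : Prop :=
  0 < p ∧ ∀ i, i + p < w.length → w.getD i false = w.getD (i + p) false

/-- A central word: a binary word with two coprime periods `p`, `q` and length `p + q - 2`. -/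
def IsCentral (w : List Bool) : Prop :=
  ∃ p q : ℕ, Nat.Coprime p q ∧ HasPeriod w p ∧ HasPeriod w q ∧ w.length + 2 = p + q

/-- A binary word is balanced if any two factors of the same length have numbers of `1`s
differing by at most `1`. -/
def BalancedWord (w : List Bool) : Prop :=
  ∀ u v : List Bool, u <:+: w → v <:+: w → u.length = v.length →
    |(u.count true : ℤ) - (v.count true : ℤ)| ≤ 1

/-- `w^m`: the `m`-th power of the word `w`. -/
def wpow (w : List Bool) (m : ℕ) : List Bool := (List.replicate m w).flatten

/-- A word is primitive if it is not a proper power. -/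
def IsPrimitiveWord (w : List Bool) : Prop := ¬ ∃ (v : List Bool) (m : ℕ), 2 ≤ m ∧ w = wpow v m

/-- A Lyndon word: a nonempty primitive word lexicographically strictly smaller than all
of its proper nonempty suffixes (for the order `0 < 1`, i.e. `false < true`). -/
def IsLyndonWord (w : List Bool) : Prop :=
  w ≠ [] ∧ IsPrimitiveWord w ∧
    ∀ u v : List Bool, w = u ++ v → u ≠ [] → v ≠ [] → List.Lex (· < ·) w v

/-- `p` is the minimal period of `w`. -/
def IsMinPeriod (w : List Bool) (p : ℕ) : Prop :=
  HasPeriod w p ∧ ∀ q : ℕ, HasPeriod w q → p ≤ q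

/-- `u` is a factor of the infinite periodic word `w^ω`. -/
def IsOmegaFactor (u w : List Bool) : Prop := ∃ m : ℕ, u <:+: wpow w m

/-- A primitive Christoffel word: a lower or upper Christoffel word `w_{a,b}` with
`gcd(a,b) = 1`. -/
def IsPrimitiveChristoffel (c : List Bool) : Prop :=
  ∃ a b : ℕ, Nat.Coprime a b ∧ (c = lowerChristoffel a b ∨ c = upperChristoffel a b)

/-- Prefix sums of a word: number of ones among the first `i` letters. -/
def PS (z : List Bool) (i : ℕ) : ℤ := ((z.take i).count true : ℤ)

/-- Window balance of a prefix-sum function on `[A,B]`. -/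
def Win (S : ℕ → ℤ) (A B : ℕ) : Prop :=
  ∀ i j p, A ≤ i → i + p ≤ B → A ≤ j → j + p ≤ B → S (i + p) + S j ≤ S (j + p) + S i + 1

theorem PS_zero (z : List Bool) : PS z 0 = 0 := by simp [PS]

theorem PS_append_add (x y : List Bool) (i : ℕ) : PS (x ++ y) (x.length + i) = PS x x.length + PS y i := by
  simp [PS, List.take_append, List.take_of_length_le (Nat.le_add_right x.length i)]

theorem PS_append_le (x y : List Bool) (i : ℕ) (h : i ≤ x.length) : PS (x ++ y) i = PS x i := by
  simp [PS, List.take_append_of_le_length h]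

theorem PS_len (x : List Bool) : PS x x.length = x.count true := by simp [PS]

theorem PS_cons (a : Bool) (y : List Bool) (i : ℕ) :
    PS (a :: y) (i + 1) = (if a then 1 else 0) + PS y i := by
  cases a <;> simp [PS] <;> ring

theorem PS_step (z : List Bool) : ∀ i, PS z i ≤ PS z (i + 1) ∧ PS z (i + 1) ≤ PS z i + 1 := by
  induction z with
  | nil => intro i; simp [PS]
  | cons a z ih =>
    intro i
    cases i with
    | zero => rw [PS_cons, PS_zero, PS_zero]; split_ifs <;> simp
    | succ i => rw [PS_cons, PS_cons]; have := ih i; constructor <;> linarith [this.1, this.2]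

theorem PS_ext : ∀ (z w : List Bool), z.length = w.length →
    (∀ i, i ≤ z.length → PS z i = PS w i) → z = w := by
  intro z
  induction z with
  | nil => intro w h _; exact (List.length_eq_zero_iff.1 h.symm).symm
  | cons a z ih =>
    intro w h hS
    cases w with
    | nil => simp at h
    | cons b w =>
      have h1 := hS 1 (by simp)
      rw [show (1:ℕ) = 0 + 1 from rfl, PS_cons, PS_cons, PS_zero, PS_zero] at h1
      have hab : a = b := by cases a <;> cases b <;> simp_all
      subst hab
      congr 1
      apply ih w (by simpa using h)
      intro i hi
      have := hS (i + 1) (by simpa using hi)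
      rw [PS_cons, PS_cons] at this
      linarith

theorem bal_iff (x u y : List Bool) :
    BalancedWord u ↔ Win (PS (x ++ u ++ y)) x.length (x.length + u.length) := by
  have key : ∀ k, k ≤ u.length → PS (x ++ u ++ y) (x.length + k) = PS x x.length + PS u k := by
    intro k hk
    rw [List.append_assoc, PS_append_add, PS_append_le _ _ _ hk]
  have fac : ∀ s f t : List Bool, u = s ++ f ++ t →
      (f.count true : ℤ) = PS u (s.length + f.length) - PS u s.length := by
    intro s f t h
    rw [h, List.append_assoc, PS_append_add, PS_append_le _ _ _ le_rfl, PS_append_le _ _ _ le_rfl,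
      PS_len f]
    ring
  constructor
  · intro hb i j p hi hip hj hjp
    obtain ⟨i, rfl⟩ := Nat.exists_eq_add_of_le hi
    obtain ⟨j, rfl⟩ := Nat.exists_eq_add_of_le hj
    have dec : ∀ k, k + p ≤ u.length → ∃ f, f <:+: u ∧ f.length = p ∧
        (f.count true : ℤ) = PS u (k + p) - PS u k := by
      intro k hk
      have e : u = u.take k ++ (u.drop k).take p ++ (u.drop k).drop p := by
        rw [List.append_assoc, List.take_append_drop, List.take_append_drop]
      have hl : ((u.drop k).take p).length = p := by simp; omega
      have hk' : (u.take k).length = k := by simp; omega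
      refine ⟨(u.drop k).take p, ⟨_, _, e.symm⟩, hl, ?_⟩
      have := fac _ _ _ e
      rw [hl, hk'] at this
      exact this
    obtain ⟨f, hf, hfl, hfc⟩ := dec i (by omega)
    obtain ⟨g, hg, hgl, hgc⟩ := dec j (by omega)
    have := hb f g hf hg (by omega)
    rw [abs_le] at this
    rw [Nat.add_assoc, Nat.add_assoc, key _ (by omega), key _ (by omega), key _ (by omega), key _ (by omega)]
    linarith [this.2]
  · intro hw f g ⟨s, t, hf⟩ ⟨s', t', hg⟩ hl
    have h1 := fac s f t hf.symm
    have h2 := fac s' g t' hg.symm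
    have l1 : s.length + f.length ≤ u.length := by rw [← hf]; simp
    have l2 : s'.length + g.length ≤ u.length := by rw [← hg]; simp
    have a1 := hw (x.length + s.length) (x.length + s'.length) f.length (by omega) (by omega)
      (by omega) (by omega)
    have a2 := hw (x.length + s'.length) (x.length + s.length) f.length (by omega) (by omega)
      (by omega) (by omega)
    rw [Nat.add_assoc, Nat.add_assoc, key _ (by omega), key _ (by omega), key _ (by omega),
      key _ (by omega)] at a1 a2
    rw [← hl] at h2
    rw [abs_le]
    constructor <;> linarith

theorem bal_self (z : List Bool) : BalancedWord z ↔ Win (PS z) 0 z.length := by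
  simpa using bal_iff [] z []

theorem Win.mono {S : ℕ → ℤ} {A B A' B' : ℕ} (h : Win S A B) (hA : A ≤ A') (hB : B' ≤ B) :
    Win S A' B' := fun i j p h1 h2 h3 h4 =>
  h i j p (by omega) (by omega) (by omega) (by omega)

theorem proper_iff (z : List Bool) (hz : 0 < z.length) :
    (∀ u : List Bool, u <:+: z → u ≠ z → BalancedWord u) ↔
      Win (PS z) 0 (z.length - 1) ∧ Win (PS z) 1 z.length := by
  constructor
  · intro h
    constructor
    · have e : z = [] ++ z.take (z.length - 1) ++ z.drop (z.length - 1) := by simp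
      have hl : (z.take (z.length - 1)).length = z.length - 1 := by simp
      have hb := h (z.take (z.length - 1)) ⟨_, _, e.symm⟩ (by
        intro h; rw [h] at hl; omega)
      have := (bal_iff [] (z.take (z.length - 1)) (z.drop (z.length - 1))).1 hb
      rw [← e, hl] at this
      simpa using this
    · have e : z = z.take 1 ++ z.drop 1 ++ [] := by rw [List.append_nil, List.take_append_drop]
      have hl : (z.drop 1).length = z.length - 1 := by simp
      have hb := h (z.drop 1) ⟨_, _, e.symm⟩ (by
        intro h; rw [h] at hl; omega)
      have := (bal_iff (z.take 1) (z.drop 1) []).1 hb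
      rw [← e, hl] at this
      have h1 : (z.take 1).length = 1 := by simp; omega
      rw [h1] at this
      convert this using 1
      omega
  · rintro ⟨h1, h2⟩ u ⟨x, y, rfl⟩ hne
    rw [bal_iff x u y]
    simp only [List.length_append] at *
    by_cases hx : x.length = 0
    · by_cases hy : y.length = 0
      · exfalso; apply hne
        rw [List.length_eq_zero_iff] at hx hy
        simp [hx, hy]
      · exact h1.mono (by omega) (by omega)
    · exact h2.mono (by omega) (by omega)

theorem slope_aux (S : ℕ → ℤ) (A B : ℕ) (h : Win S A B) : ∀ N p q : ℕ, p + q ≤ N → ∀ i j : ℕ, 0 < p → 0 < q →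
    A ≤ i → i + p ≤ B → A ≤ j → j + q ≤ B →
    (q : ℤ) * (S (i + p) - S i - 1) < p * (S (j + q) - S j + 1) := by
  intro N
  induction N with
  | zero => intro p q _ i j; omega
  | succ N ih =>
    intro p q hN i j hp hq hi hip hj hjq
    rcases lt_trichotomy p q with hpq | hpq | hpq
    · obtain ⟨r, rfl⟩ := Nat.exists_eq_add_of_lt hpq
      have h1 := ih p (r + 1) (by omega) i (j + p) hp (by omega) hi hip (by omega) (by omega)
      have h2 := h i j p hi hip hj (by omega)
      rw [show j + p + (r + 1) = j + (p + r + 1) by ring] at h1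
      have hp' : (0:ℤ) < p := by exact_mod_cast hp
      push_cast at *
      nlinarith
    · subst hpq
      have h2 := h i j p hi hip hj hjq
      have hp' : (0:ℤ) < p := by exact_mod_cast hp
      nlinarith
    · obtain ⟨r, rfl⟩ := Nat.exists_eq_add_of_lt hpq
      have h1 := ih (r + 1) q (by omega) (i + q) j (by omega) hq (by omega) (by omega) hj hjq
      have h2 := h i j q hi (by omega) hj (by omega)
      rw [show i + q + (r + 1) = i + (q + r + 1) by ring] at h1
      have hp' : (0:ℤ) < q := by exact_mod_cast hq
      push_cast at *
      nlinarith

theorem lower (S : ℕ → ℤ) (n : ℕ) (hn : 3 ≤ n) (W1 : Win S 0 (n - 1)) (W2 : Win S 1 n)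
    (h0 : S 0 = 0) : ∀ i, 0 < i → i < n → (i : ℤ) * S n ≤ n * S i + n := by
  obtain ⟨D, hD⟩ : ∃ D : ℕ → ℤ, D = fun i => (n : ℤ) * S i + n - i * S n := ⟨_, rfl⟩
  have sub1 : ∀ i j, 0 < i → 0 < j → i + j < n → D (i + j) ≤ D i + D j := by
    intro i j hi hj hij
    have := W1 j 0 i (by omega) (by omega) (by omega) (by omega)
    rw [zero_add, h0, add_comm j i] at this
    simp only [hD]; push_cast
    nlinarith
  have sub2 : ∀ i j k, i < n → j < n → 0 < k → i + j = n + k → D k ≤ D i + D j := by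
    intro i j k hi hj hk hij
    have := W2 i k (n - i) (by omega) (by omega) (by omega) (by omega)
    rw [show i + (n - i) = n by omega, show k + (n - i) = j by omega] at this
    have e : (i:ℤ) + j = n + k := by exact_mod_cast hij
    have e2 : (k:ℤ) = i + j - n := by linarith
    simp only [hD, e2]
    nlinarith
  obtain ⟨m, hm, hmin⟩ := Finset.exists_min_image (Finset.Ioo 0 n) D ⟨1, by simp; omega⟩
  simp only [Finset.mem_Ioo] at hm hmin
  have hDm : 0 ≤ D m := by
    by_contra hneg
    push Not at hneg
    rcases lt_trichotomy (2 * m) n with h | h | h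
    · have a := sub1 m m (by omega) (by omega) (by omega)
      have b := hmin (m + m) (by omega)
      linarith
    · have a := sub1 m 1 (by omega) (by omega) (by omega)
      have b := sub2 m (m + 1) 1 (by omega) (by omega) (by omega) (by omega)
      linarith
    · have a := sub2 m m (2 * m - n) (by omega) (by omega) (by omega) (by omega)
      have b := hmin (2 * m - n) (by omega)
      linarith
  intro i hi hin
  have := hmin i ⟨hi, hin⟩
  have h2 : 0 ≤ D i := by linarith
  simp only [hD] at h2
  linarith

/-- The characterization: path strictly below, and as close as possible to, the line. -/
def Ch (n b : ℕ) (S : ℕ → ℤ) : Prop :=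
  S n = b ∧ ∀ i, 0 < i → i < n → (n : ℤ) * S i < i * b ∧ (i : ℤ) * b ≤ n * S i + n

theorem forward (S : ℕ → ℤ) (n : ℕ) (hn : 2 ≤ n) (W1 : Win S 0 (n - 1)) (W2 : Win S 1 n)
    (h0 : S 0 = 0) (h1 : S 1 = 0) (hst : ∀ i, S i ≤ S (i + 1) ∧ S (i + 1) ≤ S i + 1)
    (hU : ¬ Win S 0 n) : ∃ b : ℕ, 0 < b ∧ b < n ∧ ¬ Nat.Coprime n b ∧ Ch n b S := by
  obtain ⟨l, hl0, hln, hl⟩ : ∃ l, 0 < l ∧ l < n ∧ S l + 2 + S (n - l) ≤ S n := by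
    unfold Win at hU
    push Not at hU
    obtain ⟨i, j, p, hi, hip, hj, hjp, h⟩ := hU
    have hp : p ≠ 0 := by rintro rfl; simp at h; linarith
    have hij : i ≠ j := by rintro rfl; linarith
    have hor : ¬ (1 ≤ i ∧ 1 ≤ j) := fun hh => by
      have := W2 i j p (by omega) (by omega) (by omega) (by omega); linarith
    have hor2 : ¬ (i + p ≤ n - 1 ∧ j + p ≤ n - 1) := fun hh => by
      have := W1 i j p (by omega) (by omega) (by omega) (by omega); linarith
    by_cases hj0 : j = 0
    · subst hj0
      refine ⟨p, by omega, by omega, ?_⟩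
      rw [show i + p = n by omega, zero_add, h0] at h
      rw [show n - p = i by omega]
      linarith
    · exfalso
      have hi0 : i = 0 := by omega
      subst hi0
      have a := W2 1 j (p - 1) (by omega) (by omega) (by omega) (by omega)
      have b := (hst (j + (p - 1))).1
      rw [show j + (p - 1) + 1 = j + p by omega] at b
      rw [show 1 + (p - 1) = p by omega] at a
      rw [zero_add] at h
      linarith
  have hn3 : 3 ≤ n := by
    by_contra hh
    have e : n = 2 := by omega
    subst e
    have e : l = 1 := by omega
    subst e
    have := (hst 1).2
    norm_num at *
    linarith
  have hlow := lower S n hn3 W1 W2 h0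
  have hup : ∀ i, 0 < i → i < n → (l : ℤ) * S i < i * (S l + 1) := by
    intro i hi hin
    have hl' : (0:ℤ) < l := by exact_mod_cast hl0
    rcases lt_trichotomy i l with h | h | h
    · have := slope_aux S 1 n W2 _ l (l - i) le_rfl (n - l) i (by omega) (by omega) (by omega)
        (by omega) (by omega) (by omega)
      rw [show n - l + l = n by omega, show i + (l - i) = l by omega] at this
      push_cast [h.le] at this
      have h3 : (0:ℤ) < (l:ℤ) - i := by have : (i:ℤ) < l := by exact_mod_cast h
                                        linarith
      nlinarith
    · subst h; nlinarith
    · have := slope_aux S 0 (n - 1) W1 _ (i - l) l le_rfl l 0 (by omega) (by omega) (by omega)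
        (by omega) (by omega) (by omega)
      rw [show l + (i - l) = i by omega, zero_add, h0] at this
      push_cast [h.le] at this
      nlinarith
  have hpos : 0 < S n := by
    have hmono := monotone_nat_of_le_succ (fun i => (hst i).1)
    have a := hmono (Nat.zero_le l)
    have b := hmono (Nat.zero_le (n - l))
    linarith
  have hlt : S n < n := by
    have : ∀ k, S (k + 1) ≤ k := by
      intro k
      induction k with
      | zero => simp [h1]
      | succ k ih => have := (hst (k + 1)).2; push_cast; linarith
    have := this (n - 1)
    rw [show n - 1 + 1 = n by omega] at this
    push_cast [show 1 ≤ n by omega] at this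
    linarith
  have hc : (l : ℤ) * S n = n * (S l + 1) := by
    have a := hlow l hl0 hln
    have b := hlow (n - l) (by omega) (by omega)
    push_cast [hln.le] at b
    have hn' : (0:ℤ) < n := by exact_mod_cast (by omega : 0 < n)
    nlinarith
  obtain ⟨b, hb⟩ := Int.eq_ofNat_of_zero_le hpos.le
  rw [hb] at hpos hlt hc
  refine ⟨b, by exact_mod_cast hpos, by exact_mod_cast hlt, ?_, hb, ?_⟩
  · intro hco
    have hd : (n : ℤ) ∣ (l * b : ℕ) := ⟨S l + 1, by push_cast; exact hc⟩
    have hd' : n ∣ l * b := by exact_mod_cast hd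
    have := Nat.le_of_dvd hl0 (hco.dvd_of_dvd_mul_right hd')
    omega
  · intro i hi hin
    refine ⟨?_, by rw [← hb]; exact hlow i hi hin⟩
    have a := hup i hi hin
    have hl' : (0:ℤ) < l := by exact_mod_cast hl0
    have hn' : (0:ℤ) < n := by exact_mod_cast (by omega : 0 < n)
    have : (l:ℤ) * (n * S i) < l * (i * b) := by
      calc (l:ℤ) * (n * S i) = n * (l * S i) := by ring
        _ < n * (i * (S l + 1)) := by gcongr
        _ = i * (n * (S l + 1)) := by ring
        _ = l * (i * b) := by rw [← hc]; ring
    exact lt_of_mul_lt_mul_left this hl'.le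

theorem backward (S : ℕ → ℤ) (n b : ℕ) (hn : 2 ≤ n) (hb0 : 0 < b) (hbn : b < n) (h0 : S 0 = 0)
    (hco : ¬ Nat.Coprime n b) (h : Ch n b S) :
    Win S 0 (n - 1) ∧ Win S 1 n ∧ ¬ Win S 0 n := by
  obtain ⟨hSn, hS⟩ := h
  have hn' : (0:ℤ) < n := by exact_mod_cast (by omega : 0 < n)
  refine ⟨?_, ?_, ?_⟩
  · intro i j p _ hi _ hj
    rcases Nat.eq_zero_or_pos p with rfl | hp
    · simp; linarith
    have A : (n:ℤ) * (S (i + p) - S i) < p * b + n := by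
      have a := hS (i + p) (by omega) (by omega)
      push_cast at a
      rcases Nat.eq_zero_or_pos i with rfl | hi0
      · rw [h0]; push_cast at a; nlinarith
      · have b := hS i hi0 (by omega); nlinarith
    have B : (p:ℤ) * b ≤ (n:ℤ) * (S (j + p) - S j) + n := by
      have a := hS (j + p) (by omega) (by omega)
      push_cast at a
      rcases Nat.eq_zero_or_pos j with rfl | hj0
      · rw [h0]; push_cast at a; nlinarith
      · have b := hS j hj0 (by omega); nlinarith
    have : (n:ℤ) * (S (i + p) - S i - S (j + p) + S j) < n * 2 := by linarith
    have := lt_of_mul_lt_mul_left this hn'.le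
    linarith
  · intro i j p hi0 hi hj0 hj
    rcases Nat.eq_zero_or_pos p with rfl | hp
    · simp; linarith
    have A : (n:ℤ) * (S (i + p) - S i) ≤ p * b + n := by
      have b' := hS i hi0 (by omega)
      rcases Nat.lt_or_ge (i + p) n with hh | hh
      · have a := hS (i + p) (by omega) hh
        push_cast at a
        nlinarith
      · have e : i + p = n := by omega
        have e2 : (n:ℤ) = i + p := by exact_mod_cast e.symm
        rw [e, hSn]
        have : (n:ℤ) * b = i * b + p * b := by rw [e2]; ring
        linarith
    have B : (p:ℤ) * b < (n:ℤ) * (S (j + p) - S j) + n := by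
      have b' := hS j hj0 (by omega)
      rcases Nat.lt_or_ge (j + p) n with hh | hh
      · have a := hS (j + p) (by omega) hh
        push_cast at a
        nlinarith
      · have e : j + p = n := by omega
        have e2 : (n:ℤ) = j + p := by exact_mod_cast e.symm
        rw [e, hSn]
        have : (n:ℤ) * b = j * b + p * b := by rw [e2]; ring
        linarith
    have : (n:ℤ) * (S (i + p) - S i - S (j + p) + S j) < n * 2 := by linarith
    have := lt_of_mul_lt_mul_left this hn'.le
    linarith
  · intro hW
    obtain ⟨m, hm⟩ := Nat.gcd_dvd_left n b
    obtain ⟨c, hc⟩ := Nat.gcd_dvd_right n b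
    have hg : Nat.gcd n b ≠ 1 := hco
    have hg0 : 0 < Nat.gcd n b := Nat.gcd_pos_of_pos_right _ hb0
    generalize Nat.gcd n b = g at *
    have hm0 : 0 < m := by rcases Nat.eq_zero_or_pos m with h | h; · simp [h] at hm; omega
                           · exact h
    have hmn : m < n := by nlinarith [show 2 ≤ g by omega]
    have e : (m:ℤ) * b = n * c := by
      have : m * b = n * c := by rw [hm, hc]; ring
      exact_mod_cast this
    have a := hS m hm0 hmn
    have d := hS (n - m) (by omega) (by omega)
    push_cast [hmn.le] at d
    have a1 : S m < c := by
      have : (n:ℤ) * S m < n * c := by linarith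
      exact lt_of_mul_lt_mul_left this hn'.le
    have d1 : S (n - m) < b - c := by
      have : (n:ℤ) * S (n - m) < n * (b - c) := by nlinarith
      exact lt_of_mul_lt_mul_left this hn'.le
    have := hW (n - m) 0 m (by omega) (by omega) (by omega) (by omega)
    rw [show n - m + m = n by omega, zero_add, h0, hSn] at this
    linarith

theorem lex_of : ∀ (v z : List Bool), (∀ j, j ≤ v.length → PS z j ≤ PS v j) →
    (∃ j, j ≤ v.length ∧ PS z j < PS v j) → List.Lex (· < ·) z v := by
  intro v
  induction v with
  | nil =>
    rintro z _ ⟨j, hj, h⟩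
    have : j = 0 := by simpa using hj
    subst this
    simp [PS_zero] at h
  | cons y v ih =>
    intro z h1 h2
    cases z with
    | nil => exact List.Lex.nil
    | cons x z =>
      have a := h1 1 (by simp)
      rw [show (1:ℕ) = 0 + 1 from rfl, PS_cons, PS_cons, PS_zero, PS_zero] at a
      by_cases hxy : x = y
      · subst hxy
        apply List.Lex.cons
        apply ih
        · intro j hj
          have := h1 (j + 1) (by simpa using hj)
          rw [PS_cons, PS_cons] at this
          linarith
        · obtain ⟨j, hj, h⟩ := h2
          cases j with
          | zero => simp [PS_zero] at h
          | succ j =>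
            rw [PS_cons, PS_cons] at h
            exact ⟨j, by simpa using hj, by linarith⟩
      · apply List.Lex.rel
        cases x <;> cases y <;> simp_all

theorem not_lex (v r : List Bool) : ¬ List.Lex (· < ·) (v ++ r) v := by
  induction v with
  | nil => intro h; cases h
  | cons a v ih =>
    intro h
    cases h with
    | cons h => exact ih h
    | rel h => exact lt_irrefl _ h

theorem lyndon (z : List Bool) (b : ℕ) (hn : 2 ≤ z.length)
    (h : Ch z.length b (PS z)) : IsLyndonWord z := by
  have suf : ∀ u v : List Bool, z = u ++ v → u ≠ [] → v ≠ [] → List.Lex (· < ·) z v := by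
    intro u v hz hu hv
    have hu' : 0 < u.length := List.length_pos_iff.2 hu
    have hv' : 0 < v.length := List.length_pos_iff.2 hv
    have hlen : z.length = u.length + v.length := by rw [hz]; simp
    have hPS : ∀ j, PS v j = PS z (u.length + j) - PS z u.length := by
      intro j; rw [hz, PS_append_add, PS_append_le _ _ _ le_rfl]; ring
    obtain ⟨hSn, hS⟩ := h
    generalize z.length = n at *
    have hn' : (0:ℤ) < n := by exact_mod_cast (by omega : 0 < n)
    have hi := hS u.length hu' (by omega)
    have last : PS z v.length < PS v v.length := by
      rw [hPS, ← hlen, hSn]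
      have a := hS v.length hv' (by omega)
      have e : (n:ℤ) * b = u.length * b + v.length * b := by rw [hlen]; push_cast; ring
      have : (n:ℤ) * PS z v.length < n * (b - PS z u.length) := by linarith
      exact lt_of_mul_lt_mul_left this hn'.le
    apply lex_of
    · intro j hj
      rcases Nat.eq_zero_or_pos j with rfl | hj0
      · simp [PS_zero]
      rcases Nat.lt_or_ge j v.length with hjv | hjv
      · rw [hPS]
        have a := hS j hj0 (by omega)
        have d := hS (u.length + j) (by omega) (by omega)
        push_cast at d
        have : (n:ℤ) * PS z j < n * (PS z (u.length + j) - PS z u.length + 1) := by linarith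
        have := lt_of_mul_lt_mul_left this hn'.le
        linarith
      · have : j = v.length := by omega
        subst this
        exact last.le
    · exact ⟨_, le_rfl, last⟩
  refine ⟨by rintro rfl; simp at hn, ?_, suf⟩
  rintro ⟨v, m, hm, hz⟩
  obtain ⟨k, rfl⟩ := Nat.exists_eq_add_of_le hm
  have hv : v ≠ [] := by
    rintro rfl
    rw [hz] at hn
    simp [wpow] at hn
  have e1 : z = v ++ wpow v (k + 1) := by
    rw [hz, show 2 + k = (k + 1) + 1 by ring]
    simp [wpow, List.replicate_succ]
  have e2 : z = wpow v (k + 1) ++ v := by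
    rw [hz, show 2 + k = (k + 1) + 1 by ring]
    unfold wpow
    rw [List.replicate_succ']
    simp
  have := suf _ _ e2 (by simp [wpow, List.replicate_succ, hv]) hv
  rw [e1] at this
  exact not_lex _ _ this

/-- The prefix sums of the extremal word. -/
def FF (n b i : ℕ) : ℕ := if i < n then (i * b - 1) / n else b

/-- The extremal word. -/
def zz (n b : ℕ) : List Bool := (List.range n).map fun i => decide (FF n b (i + 1) ≠ FF n b i)

theorem zz_len (n b : ℕ) : (zz n b).length = n := by simp [zz]

theorem FF_mid (n b i : ℕ) (hb : 0 < b) (hi : 0 < i) (hin : i < n) :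
    n * FF n b i < i * b ∧ i * b ≤ n * FF n b i + n := by
  have : 0 < i * b := Nat.mul_pos hi hb
  unfold FF
  rw [if_pos hin]
  have a := Nat.div_add_mod (i * b - 1) n
  have c := Nat.mod_lt (i * b - 1) (by omega : n > 0)
  omega

theorem FF_step (n b i : ℕ) (hb : 0 < b) (hbn : b < n) (hi : i < n) :
    FF n b (i + 1) = FF n b i ∨ FF n b (i + 1) = FF n b i + 1 := by
  rcases Nat.eq_zero_or_pos i with rfl | hi0
  · left
    have : 1 < n := by omega
    have h2 : (b - 1) / n = 0 := Nat.div_eq_of_lt (by omega)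
    simp [FF, this, h2]; omega
  · have a := FF_mid n b i hb hi0 hi
    rcases Nat.lt_or_ge (i + 1) n with h | h
    · have c := FF_mid n b (i + 1) hb (by omega) h
      have h1 : n * FF n b i < n * (FF n b (i + 1) + 1) := by nlinarith
      have h2 : n * FF n b (i + 1) < n * (FF n b i + 2) := by nlinarith
      have h1 := Nat.lt_of_mul_lt_mul_left h1
      have h2 := Nat.lt_of_mul_lt_mul_left h2
      omega
    · have e : FF n b (i + 1) = b := by unfold FF; rw [if_neg (by omega)]
      have hn : n = i + 1 := by omega
      right
      rw [e]
      have h1 : n * FF n b i < n * b := by nlinarith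
      have h2 : n * b < n * (FF n b i + 2) := by nlinarith
      have h1 := Nat.lt_of_mul_lt_mul_left h1
      have h2 := Nat.lt_of_mul_lt_mul_left h2
      have h3 : FF n b i + 1 = b := by omega
      omega

theorem PS_zz (n b : ℕ) (hb : 0 < b) (hbn : b < n) : ∀ i, i ≤ n → PS (zz n b) i = FF n b i := by
  intro i
  induction i with
  | zero => intro _; simp [PS, FF]; omega
  | succ i ih =>
    intro hi
    have h1 := ih (by omega)
    have hg : PS (zz n b) (i + 1) = PS (zz n b) i + if FF n b (i + 1) ≠ FF n b i then 1 else 0 := by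
      unfold PS
      rw [List.take_add_one, List.getElem?_eq_getElem (by rw [zz_len]; omega)]
      rw [List.count_append]
      by_cases hh : FF n b (i + 1) = FF n b i <;> simp [zz, hh]
    rw [hg, h1]
    rcases FF_step n b i hb hbn (by omega) with h | h <;> simp [h]

theorem Ch_zz (n b : ℕ) (hb : 0 < b) (hbn : b < n) : Ch n b (PS (zz n b)) := by
  constructor
  · rw [PS_zz n b hb hbn n le_rfl]; simp [FF]
  · intro i hi hin
    rw [PS_zz n b hb hbn i hin.le]
    have := FF_mid n b i hb hi hin
    exact_mod_cast this

theorem Ch_unique (n b : ℕ) (z w : List Bool) (hz : z.length = n) (hw : w.length = n)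
    (h1 : Ch n b (PS z)) (h2 : Ch n b (PS w)) : z = w := by
  apply PS_ext _ _ (by omega)
  intro i hi
  rcases Nat.eq_zero_or_pos i with rfl | hi0
  · simp [PS_zero]
  rcases Nat.lt_or_ge i n with h | h
  · have a := h1.2 i hi0 h
    have c := h2.2 i hi0 h
    have hn' : (0:ℤ) < n := by exact_mod_cast (by omega : 0 < n)
    have x : (n:ℤ) * PS z i < n * (PS w i + 1) := by linarith
    have y : (n:ℤ) * PS w i < n * (PS z i + 1) := by linarith
    have x := lt_of_mul_lt_mul_left x hn'.le
    have y := lt_of_mul_lt_mul_left y hn'.le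
    omega
  · have : i = n := by omega
    rw [this, h1.1, h2.1]

theorem head_iff (z : List Bool) (hz : 0 < z.length) : z.head? = some false ↔ PS z 1 = 0 := by
  cases z with
  | nil => simp at hz
  | cons a z => cases a <;> simp [PS]

theorem char_iff (n : ℕ) (hn : 2 ≤ n) (z : List Bool) :
    (z.length = n ∧ z.head? = some false ∧
        ¬ BalancedWord z ∧ ∀ u : List Bool, u <:+: z → u ≠ z → BalancedWord u) ↔
      ∃ b : ℕ, 0 < b ∧ b < n ∧ ¬ Nat.Coprime n b ∧ z.length = n ∧ Ch n b (PS z) := by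
  constructor
  · rintro ⟨hl, hh, hb, hp⟩
    rw [head_iff z (by omega)] at hh
    rw [proper_iff z (by omega), hl] at hp
    rw [bal_self, hl] at hb
    obtain ⟨b, h1, h2, h3, h4⟩ := forward (PS z) n hn hp.1 hp.2 (PS_zero z) hh (PS_step z) hb
    exact ⟨b, h1, h2, h3, hl, h4⟩
  · rintro ⟨b, h1, h2, h3, hl, h4⟩
    obtain ⟨a, c, d⟩ := backward (PS z) n b hn h1 h2 (PS_zero z) h3 h4
    refine ⟨hl, ?_, ?_, ?_⟩
    · rw [head_iff z (by omega)]
      have e := h4.2 1 (by omega) (by omega)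
      have f := (PS_step z 0).1
      rw [PS_zero, zero_add] at f
      have hn' : (0:ℤ) < n := by exact_mod_cast (by omega : 0 < n)
      have : (n:ℤ) * PS z 1 < n * 1 := by
        have : (b:ℤ) < n := by exact_mod_cast h2
        push_cast at e
        linarith [e.1]
      have := lt_of_mul_lt_mul_left this hn'.le
      omega
    · rw [bal_self, hl]; exact d
    · rw [proper_iff z (by omega), hl]; exact ⟨a, c⟩

theorem card_bs (n : ℕ) (hn : 2 ≤ n) :
    ((Finset.range n).filter fun b => 0 < b ∧ ¬ Nat.Coprime n b).card = n - Nat.totient n - 1 := by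
  have h1 : (Finset.range n).filter (fun b => 0 < b ∧ ¬ Nat.Coprime n b) =
      ((Finset.range n).filter (fun b => ¬ Nat.Coprime n b)).erase 0 := by
    ext b; simp [Nat.pos_iff_ne_zero]; tauto
  have h2 := Finset.card_filter_add_card_filter_not (s := Finset.range n) (fun b => Nat.Coprime n b)
  rw [← Nat.totient_eq_card_coprime, Finset.card_range] at h2
  rw [h1, Finset.card_erase_of_mem]
  · omega
  · simp; omega

/-- For every `n ≥ 2`, there are exactly `n − φ(n) − 1` minimal forbidden
words of length `n` for the balanced language that start with `0`, and all of them are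
Lyndon words. -/
theorem stmt15 (n : ℕ) (hn : 2 ≤ n) :
    Set.ncard {z : List Bool | z.length = n ∧ z.head? = some false ∧
        ¬ BalancedWord z ∧ ∀ u : List Bool, u <:+: z → u ≠ z → BalancedWord u}
      = n - Nat.totient n - 1 ∧
    ∀ z : List Bool, z.length = n → z.head? = some false → ¬ BalancedWord z →
      (∀ u : List Bool, u <:+: z → u ≠ z → BalancedWord u) → IsLyndonWord z := by
  constructor
  · have e : {z : List Bool | z.length = n ∧ z.head? = some false ∧
        ¬ BalancedWord z ∧ ∀ u : List Bool, u <:+: z → u ≠ z → BalancedWord u} =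
        (((Finset.range n).filter fun b => 0 < b ∧ ¬ Nat.Coprime n b).image (zz n) :
          Finset (List Bool)) := by
      ext z
      rw [Set.mem_ofPred_eq, char_iff n hn]
      simp only [Finset.coe_image, Set.mem_image, Finset.mem_coe, Finset.mem_filter,
        Finset.mem_range]
      constructor
      · rintro ⟨b, h1, h2, h3, hl, h4⟩
        exact ⟨b, ⟨h2, h1, h3⟩, Ch_unique n b _ _ (zz_len n b) hl (Ch_zz n b h1 h2) h4⟩
      · rintro ⟨b, ⟨h2, h1, h3⟩, rfl⟩
        exact ⟨b, h1, h2, h3, zz_len n b, Ch_zz n b h1 h2⟩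
    rw [e, Set.ncard_coe_finset, Finset.card_image_of_injOn, card_bs n hn]
    intro b hb c hc hbc
    simp only [Finset.coe_filter, Finset.mem_range, Set.mem_ofPred_eq] at hb hc
    have x := (Ch_zz n b hb.2.1 hb.1).1
    have y := (Ch_zz n c hc.2.1 hc.1).1
    rw [hbc, y] at x
    exact_mod_cast x.symm
  · intro z hl hh hb hp
    obtain ⟨b, _, _, _, _, h⟩ := (char_iff n hn z).1 ⟨hl, hh, hb, hp⟩
    subst hl
    exact lyndon z b hn h
end

section
/- A binary word w is a prefix of some lower Christoffel word if and only if w is a power of the letter 1 (possibly the empty word) or w = 0·u for some binary word u such that both 0·u and 1·u are balanced (i.e., u is a left special balanced word). -/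
/-- Number of ones in the prefix of length `k`. -/
def prefOnes (x : List Bool) (k : ℕ) : ℕ := (x.take k).count true

theorem prefOnes_zero (x : List Bool) : prefOnes x 0 = 0 := by simp [prefOnes]

theorem prefOnes_succ (x : List Bool) (i : ℕ) (h : i < x.length) :
    prefOnes x (i + 1) = prefOnes x i + if x[i] = true then 1 else 0 := by
  unfold prefOnes
  rw [← List.take_concat_get' x i h, List.count_append, List.count_singleton]
  simp

theorem prefOnes_cons (c : Bool) (x : List Bool) (k : ℕ) :
    prefOnes (c :: x) (k + 1) = (if c = true then 1 else 0) + prefOnes x k := by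
  unfold prefOnes
  rw [List.take_succ_cons, List.count_cons]
  simp [add_comm]

theorem factor_count (x p u s : List Bool) (h : p ++ u ++ s = x) :
    p.length + u.length ≤ x.length ∧
    prefOnes x (p.length + u.length) = prefOnes x p.length + u.count true := by
  subst h
  constructor
  · simp
  · unfold prefOnes
    rw [List.take_append_of_le_length (by simp), List.take_of_length_le (by simp),
      List.append_assoc, List.take_append_of_le_length (by simp),
      List.take_of_length_le (by simp), List.count_append]

theorem exists_factor (x : List Bool) (i l : ℕ) (h : i + l ≤ x.length) :
    ∃ u, u <:+: x ∧ u.length = l ∧ prefOnes x (i + l) = prefOnes x i + u.count true := by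
  refine ⟨(x.drop i).take l, ⟨x.take i, (x.drop i).drop l, ?_⟩, ?_, ?_⟩
  · rw [List.append_assoc, List.take_append_drop, List.take_append_drop]
  · simp; omega
  · unfold prefOnes
    rw [List.take_add, List.count_append]

theorem balanced_iff (x : List Bool) : BalancedWord x ↔
    ∀ i j l, i + l ≤ x.length → j + l ≤ x.length →
      prefOnes x (i + l) + prefOnes x j ≤ prefOnes x (j + l) + prefOnes x i + 1 := by
  constructor
  · intro h i j l hi hj
    obtain ⟨u, hu, hul, huc⟩ := exists_factor x i l hi
    obtain ⟨v, hv, hvl, hvc⟩ := exists_factor x j l hj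
    have := abs_le.1 (h u v hu hv (by omega))
    omega
  · rintro h u v ⟨p, s, hu⟩ ⟨p', s', hv⟩ hl
    obtain ⟨h1, h2⟩ := factor_count _ _ _ _ hu
    obtain ⟨h3, h4⟩ := factor_count _ _ _ _ hv
    rw [← hl] at h3 h4
    have h5 := h _ _ _ h1 h3
    have h6 := h _ _ _ h3 h1
    rw [abs_le]
    omega

theorem floor_add_le (n b i l : ℕ) (hn : 0 < n) :
    i * b / n + l * b / n ≤ (i + l) * b / n ∧
    (i + l) * b / n ≤ i * b / n + l * b / n + 1 := by
  have e1 := Nat.div_add_mod (i * b) n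
  have e2 := Nat.div_add_mod (l * b) n
  have m1 := Nat.mod_lt (i * b) hn
  have m2 := Nat.mod_lt (l * b) hn
  constructor
  · rw [add_mul]; exact Nat.div_add_div_le_add_div
  · rw [← Nat.lt_succ_iff, Nat.div_lt_iff_lt_mul hn]
    simp only [Nat.succ_eq_add_one]
    nlinarith

theorem floor_step (a b i : ℕ) (hn : 0 < a + b) :
    (i + 1) * b / (a + b) = i * b / (a + b) +
      if (i + 1) * b / (a + b) ≠ i * b / (a + b) then 1 else 0 := by
  have h := floor_add_le (a + b) b i 1 hn
  have h1 : 1 * b / (a + b) ≤ 1 := by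
    rw [← Nat.lt_succ_iff, Nat.div_lt_iff_lt_mul hn]
    simp only [Nat.succ_eq_add_one]
    omega
  have h2 : (i + 1) * b / (a + b) ≤ i * b / (a + b) + 1 := by
    rw [← Nat.lt_succ_iff, Nat.div_lt_iff_lt_mul hn]
    have e1 := Nat.div_add_mod (i * b) (a + b)
    have m1 := Nat.mod_lt (i * b) hn
    simp only [Nat.succ_eq_add_one]
    nlinarith
  have h4 : i * b / (a + b) ≤ (i + 1) * b / (a + b) := le_trans (Nat.le_add_right _ _) h.1
  split_ifs with h3 <;> omega

theorem christoffel_pref_iff (w : List Bool) (a b : ℕ) (hn : 0 < a + b) :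
    w <+: lowerChristoffel a b ↔
    w.length ≤ a + b ∧ ∀ k ≤ w.length, prefOnes w k = k * b / (a + b) := by
  have hlen : (lowerChristoffel a b).length = a + b := by simp [lowerChristoffel]
  rw [List.prefix_iff_getElem]
  constructor
  · rintro ⟨hl, h⟩
    refine ⟨hlen ▸ hl, ?_⟩
    intro k
    induction k with
    | zero => intro _; simp [prefOnes_zero]
    | succ k ih =>
      intro hk
      rw [prefOnes_succ w k (by omega), ih (by omega), h k (by omega), floor_step a b k hn]
      simp [lowerChristoffel]
  · rintro ⟨hl, h⟩
    refine ⟨hlen ▸ hl, ?_⟩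
    intro k hk
    have h1 := prefOnes_succ w k hk
    rw [h k hk.le, h (k + 1) hk] at h1
    simp only [lowerChristoffel, List.getElem_map, List.getElem_range]
    cases hw : w[k] <;> simp [hw] at h1 ⊢ <;> omega

theorem slope_sep (S : ℕ → ℕ) (N : ℕ)
    (h : ∀ i l, 1 ≤ i → 1 ≤ l → i + l ≤ N → S i + S l ≤ S (i + l) ∧ S (i + l) ≤ S i + S l + 1) :
    ∀ m j k, j + k ≤ m → 1 ≤ j → 1 ≤ k → j ≤ N → k ≤ N → j * S k < k * (S j + 1) := by
  intro m
  induction m with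
  | zero => intro j k h1 h2; omega
  | succ m ih =>
    intro j k hm hj hk hjN hkN
    rcases lt_trichotomy j k with hlt | heq | hgt
    · obtain ⟨d, rfl⟩ := Nat.exists_eq_add_of_lt hlt
      have i1 := ih j (d + 1) (by omega) hj (by omega) hjN (by omega)
      have i2 := (h j (d + 1) hj (by omega) (by omega)).2
      rw [add_assoc]
      nlinarith
    · subst heq; nlinarith
    · obtain ⟨d, rfl⟩ := Nat.exists_eq_add_of_lt hgt
      have i1 := ih (d + 1) k (by omega) (by omega) hk (by omega) hkN
      have i2 := (h k (d + 1) hk (by omega) (by omega)).1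
      rw [add_assoc]
      nlinarith

theorem max_slope (S : ℕ → ℕ) (N : ℕ) (hN : 1 ≤ N) :
    ∃ q, 1 ≤ q ∧ q ≤ N ∧ ∀ k, 1 ≤ k → k ≤ N → q * S k ≤ k * S q := by
  obtain ⟨q, hq, hmax⟩ := Finset.exists_max_image (Finset.Icc 1 N)
    (fun k => (S k : ℚ) / k) ⟨1, by simp [hN]⟩
  rw [Finset.mem_Icc] at hq
  refine ⟨q, hq.1, hq.2, fun k h1 h2 => ?_⟩
  have := hmax k (Finset.mem_Icc.2 ⟨h1, h2⟩)
  have hq0 : (0 : ℚ) < q := by exact_mod_cast hq.1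
  have hk0 : (0 : ℚ) < k := by exact_mod_cast h1
  rw [div_le_div_iff₀ hk0 hq0] at this
  have h3 : S k * q ≤ S q * k := by exact_mod_cast this
  linarith

theorem prefOnes_le (x : List Bool) (k : ℕ) : prefOnes x k ≤ k :=
  List.count_le_length.trans (by simp)

/-- A binary word is a prefix of some lower Christoffel word iff it is a
power of the letter `1` or of the form `0·u` for a left special balanced word `u`. -/
theorem stmt17 (w : List Bool) :
    (∃ a b : ℕ, (a ≠ 0 ∨ b ≠ 0) ∧ w <+: lowerChristoffel a b) ↔
    ((∃ m : ℕ, w = List.replicate m true) ∨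
      ∃ u : List Bool, w = false :: u ∧
        BalancedWord (false :: u) ∧ BalancedWord (true :: u)) := by
  constructor
  · rintro ⟨a, b, hab, hw⟩
    have hn : 0 < a + b := by omega
    have hP := (christoffel_pref_iff w a b hn).1 hw
    rcases Nat.eq_zero_or_pos a with ha | ha
    · left
      refine ⟨w.length, ?_⟩
      subst ha
      have := hP.2 w.length le_rfl
      simp only [zero_add] at this hn
      rw [Nat.mul_div_cancel _ hn] at this
      unfold prefOnes at this
      rw [List.take_length, List.count_eq_length] at this
      exact List.eq_replicate_iff.2 ⟨rfl, fun c hc => (this c hc).symm⟩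
    · cases w with
      | nil => left; exact ⟨0, rfl⟩
      | cons c u =>
        right
        have h1 := hP.2 1 (by simp)
        rw [show 1 * b / (a + b) = 0 from Nat.div_eq_of_lt (by omega),
          show (1 : ℕ) = 0 + 1 from rfl, prefOnes_cons, prefOnes_zero] at h1
        have hc : c = false := by
          cases c <;> simp at h1 ⊢
        subst hc
        refine ⟨u, rfl, ?_, ?_⟩
        · rw [balanced_iff]
          intro i j l hi hj
          rw [hP.2 _ hi, hP.2 _ hj, hP.2 i (by omega), hP.2 j (by omega)]
          have := floor_add_le (a + b) b i l hn
          have := floor_add_le (a + b) b j l hn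
          omega
        · have hT : ∀ k, k + 1 ≤ u.length + 1 →
              prefOnes (true :: u) (k + 1) = 1 + (k + 1) * b / (a + b) := by
            intro k hk
            have := hP.2 (k + 1) (by simpa using hk)
            rw [prefOnes_cons] at this ⊢
            simp at this ⊢
            omega
          rw [balanced_iff]
          intro i j l hi hj
          simp only [List.length_cons] at hi hj
          rcases Nat.eq_zero_or_pos l with rfl | hl
          · simp only [add_zero]; omega
          have fi := floor_add_le (a + b) b i l hn
          have fj := floor_add_le (a + b) b j l hn
          have key : ∀ i, i + l ≤ u.length + 1 →
              prefOnes (true :: u) i + l * b / (a + b) ≤ prefOnes (true :: u) (i + l) ∧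
              prefOnes (true :: u) (i + l) ≤ prefOnes (true :: u) i + l * b / (a + b) + 1 := by
            intro i hi
            have fi := floor_add_le (a + b) b i l hn
            have e : prefOnes (true :: u) (i + l) = 1 + (i + l) * b / (a + b) := by
              have := hT (i + l - 1) (by omega)
              rwa [show i + l - 1 + 1 = i + l by omega] at this
            rw [e]
            cases i with
            | zero => simp [prefOnes_zero]; omega
            | succ i =>
              rw [hT i (by omega)]
              omega
          have := key i hi
          have := key j hj
          omega
  · rintro (⟨m, rfl⟩ | ⟨u, rfl, h0, h1⟩)
    · refine ⟨0, m + 1, by simp, ?_⟩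
      rw [christoffel_pref_iff _ _ _ (by omega)]
      refine ⟨by simp, fun k hk => ?_⟩
      simp only [List.length_replicate] at hk
      rw [zero_add, Nat.mul_div_cancel _ (by omega)]
      simp [prefOnes, List.take_replicate, hk]
    · rw [balanced_iff] at h0 h1
      set w := false :: u with hwdef
      have hlen : w.length = u.length + 1 := by simp [hwdef]
      have hT : ∀ k, 1 ≤ k → prefOnes (true :: u) k = prefOnes w k + 1 := by
        intro k hk
        obtain ⟨k, rfl⟩ := Nat.exists_eq_add_of_le' hk
        rw [hwdef, prefOnes_cons, prefOnes_cons]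
        simp [add_comm]
      have hsep := slope_sep (prefOnes w) w.length (by
        intro i l hi hl hil
        have a1 := h0 i 0 l hil (by omega)
        have a2 := h1 0 i l (by simp; omega) (by simp; omega)
        simp only [zero_add] at a1 a2
        rw [hT _ hl, hT _ hi, hT _ (by omega : 1 ≤ i + l)] at a2
        rw [prefOnes_zero] at a1 a2
        omega)
      obtain ⟨q, hq1, hqN, hmax⟩ := max_slope (prefOnes w) w.length (by omega)
      have hpq := prefOnes_le w q
      set p := prefOnes w q with hp
      have hN : 0 < w.length := by omega
      have hsum : w.length * (q - p) + w.length * p = w.length * q := by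
        rw [← mul_add]; congr 1; omega
      have hpos : 0 < w.length * q := Nat.mul_pos hN hq1
      refine ⟨w.length * (q - p), w.length * p, by omega, ?_⟩
      rw [christoffel_pref_iff _ _ _ (by omega), hsum]
      refine ⟨Nat.le_mul_of_pos_right _ hq1, fun k hk => ?_⟩
      rw [mul_left_comm, Nat.mul_div_mul_left _ _ hN]
      rcases Nat.eq_zero_or_pos k with rfl | hk0
      · simp [prefOnes_zero]
      symm
      rw [Nat.div_eq_iff hq1]
      have b1 := hmax k hk0 hk
      have b2 := hsep _ k q le_rfl hk0 hq1 hk hqN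
      rw [← hp] at b2
      constructor
      · linarith
      · have : k * p < prefOnes w k * q + q := by linarith
        omega
end
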